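/- Let H be a real Hilbert space with more than one element, let c ∈ [1,∞), n ∈ ℕ₀, x,y ∈ H, and V ∈ 𝒞^{n+1}_c(H,[0,∞)). Then max_{i∈{0,1,…,n}} ‖V^{(i)}(x) − V^{(i)}(y)‖_{L^{(i)}(H,ℝ)} ≤ c·2^{c−1}·‖x−y‖_H·(1 + V(x) + ‖x−y‖_H^{c−1}). -/

import Mathlib

/-!
The `i = 0` estimate says that `‖V u - V v‖ ≤ c ‖u - v‖ M ^ (1 - 1 / c)` whenever `M` bounds
`1 + ‖V‖` on the segment from `u` to `v`. Letting the segment shrink, this is a one-sided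
differential inequality `φ' ≤ c ‖y - x‖ φ ^ (1 - 1 / c)` for `φ = 1 + ‖V‖` along the line from `x`
to `y`, hence `(φ ^ (1 / c))' ≤ ‖y - x‖`. So `φ ≤ (φ x ^ (1 / c) + ‖y - x‖) ^ c` on the whole
segment, and inserting this bound into the estimate for the `i`-th derivative leaves
`(φ x ^ (1 / c) + ‖y - x‖) ^ (c - 1) ≤ 2 ^ (c - 1) (φ x + ‖y - x‖ ^ (c - 1))`.
-/

open Filter Set Topology
open scoped NNReal ENNReal

section Rpow

variable {a b p : ℝ}

lemma rpow_sub_rpow_le_mul_sub (ha : 0 < a) (hb : 0 ≤ b) (hp₀ : 0 ≤ p) (hp₁ : p ≤ 1) :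
    b ^ p - a ^ p ≤ p * (b - a) * a ^ (p - 1) := by
  have bernoulli : (1 + (b / a - 1)) ^ p ≤ 1 + p * (b / a - 1) :=
    rpow_one_add_le_one_add_mul_self (by linarith [div_nonneg hb ha.le]) hp₀ hp₁
  rw [add_sub_cancel, Real.div_rpow hb ha.le,
    div_le_iff₀ (Real.rpow_pos_of_pos ha p)] at bernoulli
  calc b ^ p - a ^ p ≤ (1 + p * (b / a - 1)) * a ^ p - a ^ p := by gcongr
    _ = p * (b - a) * a ^ (p - 1) := by
      rw [Real.rpow_sub_one ha.ne']
      field_simp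
      ring

lemma add_rpow_le_two_rpow_mul_rpow_add_rpow (ha : 0 ≤ a) (hb : 0 ≤ b) (hp : 0 ≤ p) :
    (a + b) ^ p ≤ 2 ^ p * (a ^ p + b ^ p) := by
  lift a to ℝ≥0 using ha
  lift b to ℝ≥0 using hb
  have h := ENNReal.add_rpow_le_two_rpow_mul_rpow_add_rpow (a : ℝ≥0∞) b hp
  rw [← ENNReal.coe_ofNat, ← ENNReal.coe_add] at h
  simp only [← ENNReal.coe_rpow_of_nonneg _ hp] at h
  exact_mod_cast h

end Rpow

lemma eventually_forall_Icc_lt_of_continuousWithinAt {α β : Type*} [TopologicalSpace α]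
    [LinearOrder α] [OrderTopology α] [TopologicalSpace β] [LinearOrder β] [ClosedIciTopology β]
    {f : α → β} {t : α} {M : β} (hf : ContinuousWithinAt f (Ici t) t) (hM : f t < M) :
    ∀ᶠ z in 𝓝[>] t, ∀ w ∈ Icc t z, f w < M := by
  have hIcc : Tendsto (fun z => Icc t z) (𝓝[≥] t) (𝓝[≥] t).smallSets :=
    (tendsto_const_pure.mono_right (pure_le_nhdsWithin self_mem_Ici)).Icc tendsto_id
  exact (hIcc.eventually (hf.eventually_lt_const hM).smallSets).filter_mono
    (nhdsWithin_mono t Ioi_subset_Ici_self)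

section DifferentialInequality

variable {f : ℝ → ℝ} {p L : ℝ}

lemma eventually_slope_rpow_lt {t r : ℝ} (hp₀ : 0 ≤ p) (hp₁ : p ≤ 1)
    (hf : ContinuousWithinAt f (Ici t) t) (hft : 0 < f t)
    (hfL : ∀ᶠ z in 𝓝[>] t, ∀ M, (∀ w ∈ Icc t z, f w ≤ M) →
      f z - f t ≤ L * (z - t) * M ^ (1 - p))
    (hr : p * L < r) :
    ∀ᶠ z in 𝓝[>] t, slope (fun s => f s ^ p) t z < r := by
  obtain ⟨M, hMr, hM⟩ : ∃ M, p * L * M ^ (1 - p) * f t ^ (p - 1) < r ∧ f t < M := by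
    have hcont : ContinuousAt (fun M => p * L * M ^ (1 - p) * f t ^ (p - 1)) (f t) := by
      have := Real.continuousAt_rpow_const (f t) (1 - p) (.inl hft.ne')
      fun_prop
    have hval : p * L * f t ^ (1 - p) * f t ^ (p - 1) < r := by
      rwa [mul_assoc, ← Real.rpow_add hft, sub_add_sub_cancel', sub_self, Real.rpow_zero,
        mul_one]
    exact (((hcont.eventually_lt_const hval).filter_mono nhdsWithin_le_nhds).and
      (self_mem_nhdsWithin (s := Ioi (f t)))).exists
  have hpos : ∀ᶠ z in 𝓝[>] t, 0 < f z :=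
    (hf.mono Ioi_subset_Ici_self).eventually_const_lt hft
  filter_upwards [hfL, hpos, eventually_forall_Icc_lt_of_continuousWithinAt hf hM,
    self_mem_nhdsWithin] with z hz hz₀ hzM hzt
  have hzt' : 0 < z - t := sub_pos.2 hzt
  rw [slope_def_field, div_lt_iff₀ hzt']
  calc f z ^ p - f t ^ p ≤ p * (f z - f t) * f t ^ (p - 1) :=
        rpow_sub_rpow_le_mul_sub hft hz₀.le hp₀ hp₁
    _ ≤ p * (L * (z - t) * M ^ (1 - p)) * f t ^ (p - 1) := by
        gcongr
        exact hz M fun w hw => (hzM w hw).le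
    _ = p * L * M ^ (1 - p) * f t ^ (p - 1) * (z - t) := by ring
    _ < r * (z - t) := by gcongr

theorem rpow_le_rpow_add_of_sub_le_mul_rpow {a b : ℝ} (hp₀ : 0 ≤ p) (hp₁ : p ≤ 1)
    (hf : ContinuousOn f (Icc a b)) (hf₀ : ∀ t ∈ Icc a b, 0 < f t)
    (hfL : ∀ s t M : ℝ, a ≤ s → s < t → t ≤ b → (∀ w ∈ Icc s t, f w ≤ M) →
      f t - f s ≤ L * (t - s) * M ^ (1 - p)) :
    ∀ t ∈ Icc a b, f t ^ p ≤ f a ^ p + p * L * (t - a) := by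
  refine image_le_of_liminf_slope_right_le_deriv_boundary (B' := fun _ => p * L)
    (hf.rpow_const fun t ht => .inl (hf₀ t ht).ne') (by simp) (by fun_prop)
    (fun t _ => ?_) fun t ht r hr => Eventually.frequently ?_
  · have hsub := (hasDerivWithinAt_id t (Ici t)).sub_const a
    simpa using! (hsub.const_mul (p * L)).const_add (f a ^ p)
  · refine eventually_slope_rpow_lt hp₀ hp₁
      ((hf t (Ico_subset_Icc_self ht)).mono_of_mem_nhdsWithin (Icc_mem_nhdsGE_of_mem ht))
      (hf₀ t (Ico_subset_Icc_self ht)) ?_ hr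
    filter_upwards [Ioo_mem_nhdsGT ht.2] with z hz M
    exact hfL t z M ht.1 hz.1 hz.2.le

end DifferentialInequality

section Segment

variable {E F : Type*} [SeminormedAddCommGroup E] [NormedSpace ℝ E]

theorem rpow_le_rpow_add_of_sub_le_mul_rpow_segment {φ : E → ℝ} {p L : ℝ}
    (hp₀ : 0 ≤ p) (hp₁ : p ≤ 1) (hφ : Continuous φ) (hφ₀ : ∀ z, 0 < φ z)
    (hφL : ∀ u v M, (∀ z ∈ segment ℝ u v, φ z ≤ M) → φ u - φ v ≤ L * ‖u - v‖ * M ^ (1 - p))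
    (x y : E) :
    φ y ^ p ≤ φ x ^ p + p * L * ‖x - y‖ := by
  let γ : ℝ →ᵃ[ℝ] E := AffineMap.lineMap x y
  have hγ : Continuous γ := AffineMap.lineMap_continuous
  have h := rpow_le_rpow_add_of_sub_le_mul_rpow (a := 0) (b := 1) (f := φ ∘ γ) (L := L * ‖x - y‖)
    hp₀ hp₁ (hφ.comp hγ).continuousOn (fun t _ => hφ₀ _) ?_ 1 (by simp)
  · simpa [γ, mul_assoc] using h
  intro s t M _ hst _ hM
  have hseg : ∀ z ∈ segment ℝ (γ t) (γ s), φ z ≤ M := by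
    rw [segment_symm, ← image_segment, segment_eq_Icc hst.le]
    rintro _ ⟨w, hw, rfl⟩
    exact hM w hw
  have hnorm : ‖γ t - γ s‖ = ‖x - y‖ * (t - s) := by
    rw [← dist_eq_norm, dist_lineMap_lineMap, Real.dist_eq, abs_of_pos (sub_pos.2 hst),
      dist_eq_norm, mul_comm]
  simpa only [hnorm, ← mul_assoc] using! hφL _ _ M hseg

variable [SeminormedAddCommGroup F]

/-- The supremum of `‖V‖` over the segment from `u` to `v`, in the parametrization used in the
definition of the class `𝒞^m_c`. It has the junk value `0` when `V` is unbounded on the segment. -/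
noncomputable def segmentSupNorm (V : E → F) (u v : E) : ℝ :=
  ⨆ r ∈ Icc (0 : ℝ) 1, ‖V (r • u + (1 - r) • v)‖

variable {V : E → F}

lemma segmentSupNorm_nonneg (V : E → F) (u v : E) : 0 ≤ segmentSupNorm V u v :=
  Real.iSup_nonneg fun _ => Real.iSup_nonneg fun _ => norm_nonneg _

lemma segmentSupNorm_le {u v : E} {M : ℝ} (hM : ∀ z ∈ segment ℝ u v, ‖V z‖ ≤ M) :
    segmentSupNorm V u v ≤ M := by
  have hM₀ : 0 ≤ M := (norm_nonneg _).trans (hM u (left_mem_segment ℝ u v))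
  refine Real.iSup_le (fun r => Real.iSup_le (fun hr => hM _ ?_) hM₀) hM₀
  exact ⟨r, 1 - r, hr.1, sub_nonneg.2 hr.2, add_sub_cancel r 1, rfl⟩

theorem one_add_segmentSupNorm_le {c : ℝ} (hc : 1 ≤ c) (hV : Continuous V)
    (hVc : ∀ u v, ‖V u - V v‖ ≤ c * ‖u - v‖ * (1 + segmentSupNorm V u v) ^ (1 - 1 / c))
    (x y : E) :
    1 + segmentSupNorm V x y ≤ ((1 + ‖V x‖) ^ (1 / c) + ‖x - y‖) ^ c := by
  have hc₀ : 0 < c := by linarith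
  have hc₁ : 1 / c ≤ 1 := (div_le_one hc₀).2 hc
  have hgrowth (u v M) (hM : ∀ z ∈ segment ℝ u v, 1 + ‖V z‖ ≤ M) :
      (1 + ‖V u‖) - (1 + ‖V v‖) ≤ c * ‖u - v‖ * M ^ (1 - 1 / c) := by
    have hS : segmentSupNorm V u v ≤ M - 1 :=
      segmentSupNorm_le fun z hz => le_sub_iff_add_le'.2 (hM z hz)
    have hS₀ := segmentSupNorm_nonneg V u v
    calc (1 + ‖V u‖) - (1 + ‖V v‖) = ‖V u‖ - ‖V v‖ := add_sub_add_left_eq_sub _ _ _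
      _ ≤ ‖V u - V v‖ := norm_sub_norm_le _ _
      _ ≤ c * ‖u - v‖ * (1 + segmentSupNorm V u v) ^ (1 - 1 / c) := hVc u v
      _ ≤ c * ‖u - v‖ * M ^ (1 - 1 / c) := by
        gcongr
        linarith
  refine le_sub_iff_add_le'.1 (segmentSupNorm_le fun z hz => le_sub_iff_add_le'.2 ?_)
  rw [← Real.rpow_inv_le_iff_of_pos (by positivity) (by positivity) hc₀, ← one_div]
  calc (1 + ‖V z‖) ^ (1 / c) ≤ (1 + ‖V x‖) ^ (1 / c) + 1 / c * c * ‖x - z‖ :=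
        rpow_le_rpow_add_of_sub_le_mul_rpow_segment (by positivity) hc₁ (by fun_prop)
          (fun _ => by positivity) hgrowth x z
    _ = (1 + ‖V x‖) ^ (1 / c) + ‖x - z‖ := by rw [one_div_mul_cancel hc₀.ne', one_mul]
    _ ≤ (1 + ‖V x‖) ^ (1 / c) + ‖x - y‖ := by
        gcongr
        simpa [dist_eq_norm, norm_sub_rev] using segment_subset_closedBall_left x y hz

theorem one_add_segmentSupNorm_rpow_le {c : ℝ} (hc : 1 ≤ c) (hV : Continuous V)
    (hVc : ∀ u v, ‖V u - V v‖ ≤ c * ‖u - v‖ * (1 + segmentSupNorm V u v) ^ (1 - 1 / c))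
    (x y : E) :
    (1 + segmentSupNorm V x y) ^ (1 - 1 / c) ≤
      2 ^ (c - 1) * (1 + ‖V x‖ + ‖x - y‖ ^ (c - 1)) := by
  have hc₀ : 0 < c := by linarith
  have hexp : 1 - 1 / c = (c - 1) / c := by rw [sub_div, div_self hc₀.ne']
  have : 0 ≤ (c - 1) / c := div_nonneg (sub_nonneg.2 hc) hc₀.le
  have hexp₁ : (c - 1) / c ≤ 1 := (div_le_one hc₀).2 (by linarith)
  have hS₀ := segmentSupNorm_nonneg V x y
  rw [hexp]
  calc (1 + segmentSupNorm V x y) ^ ((c - 1) / c)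
      ≤ (((1 + ‖V x‖) ^ (1 / c) + ‖x - y‖) ^ c) ^ ((c - 1) / c) := by
        gcongr
        exact one_add_segmentSupNorm_le hc hV hVc x y
    _ = ((1 + ‖V x‖) ^ (1 / c) + ‖x - y‖) ^ (c - 1) := by
        rw [← Real.rpow_mul (by positivity), mul_div_cancel₀ _ hc₀.ne']
    _ ≤ 2 ^ (c - 1) * (((1 + ‖V x‖) ^ (1 / c)) ^ (c - 1) + ‖x - y‖ ^ (c - 1)) :=
        add_rpow_le_two_rpow_mul_rpow_add_rpow (by positivity) (norm_nonneg _) (sub_nonneg.2 hc)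
    _ ≤ 2 ^ (c - 1) * (1 + ‖V x‖ + ‖x - y‖ ^ (c - 1)) := by
        rw [← Real.rpow_mul (by positivity), one_div_mul_eq_div]
        gcongr
        exact Real.rpow_le_self_of_one_le (by simp) hexp₁

end Segment

lemma norm_iteratedFDeriv_zero_sub (𝕜 : Type*) [NontriviallyNormedField 𝕜] {E F : Type*}
    [NormedAddCommGroup E] [NormedSpace 𝕜 E] [NormedAddCommGroup F] [NormedSpace 𝕜 F]
    (V : E → F) (u v : E) :
    ‖iteratedFDeriv 𝕜 0 V u - iteratedFDeriv 𝕜 0 V v‖ = ‖V u - V v‖ := by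
  simp only [iteratedFDeriv_zero_eq_comp, Function.comp_apply, ← map_sub,
    LinearIsometryEquiv.norm_map]

theorem stmt6_general {E F : Type*} [NormedAddCommGroup E] [NormedSpace ℝ E]
    [NormedAddCommGroup F] [NormedSpace ℝ F] {c : ℝ} (hc : 1 ≤ c) (n : ℕ) (x y : E) {V : E → F}
    (hV : ContDiff ℝ n V)
    (hVc : ∀ u v, ∀ i ≤ n, ‖iteratedFDeriv ℝ i V u - iteratedFDeriv ℝ i V v‖ ≤
      c * ‖u - v‖ * (1 + segmentSupNorm V u v) ^ (1 - 1 / c)) :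
    ∀ i ≤ n, ‖iteratedFDeriv ℝ i V x - iteratedFDeriv ℝ i V y‖ ≤
      c * 2 ^ (c - 1) * ‖x - y‖ * (1 + ‖V x‖ + ‖x - y‖ ^ (c - 1)) := by
  intro i hi
  have hVc₀ (u v) : ‖V u - V v‖ ≤ c * ‖u - v‖ * (1 + segmentSupNorm V u v) ^ (1 - 1 / c) :=
    norm_iteratedFDeriv_zero_sub ℝ V u v ▸ hVc u v 0 n.zero_le
  calc ‖iteratedFDeriv ℝ i V x - iteratedFDeriv ℝ i V y‖
      ≤ c * ‖x - y‖ * (1 + segmentSupNorm V x y) ^ (1 - 1 / c) := hVc x y i hi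
    _ ≤ c * ‖x - y‖ * (2 ^ (c - 1) * (1 + ‖V x‖ + ‖x - y‖ ^ (c - 1))) := by
        gcongr
        exact one_add_segmentSupNorm_rpow_le hc hV.continuous hVc₀ x y
    _ = c * 2 ^ (c - 1) * ‖x - y‖ * (1 + ‖V x‖ + ‖x - y‖ ^ (c - 1)) := by ring

/-- Let `H` be a nontrivial real Hilbert space, `c ∈ [1,∞)`, `n ∈ ℕ₀`,
`x, y ∈ H`, and `V ∈ 𝒞^{n+1}_c(H,[0,∞))`.  Then for every `i ∈ {0,…,n}` it
holds that
`‖V⁽ⁱ⁾(x) − V⁽ⁱ⁾(y)‖ ≤ c·2^{c−1}·‖x−y‖·(1 + V(x) + ‖x−y‖^{c−1})`. -/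
theorem stmt6 {H : Type*} [NormedAddCommGroup H] [InnerProductSpace ℝ H]
    [Nontrivial H]
    (c : ℝ) (hc : 1 ≤ c) (n : ℕ) (x y : H) (V : H → ℝ)
    (hV0 : ∀ z : H, 0 ≤ V z)
    (hsmooth : ContDiff ℝ n V)
    (hbound : ∀ u v : H, ∀ i : ℕ, i ≤ n →
      ‖iteratedFDeriv ℝ i V u - iteratedFDeriv ℝ i V v‖ ≤
        c * ‖u - v‖ *
          (1 + ⨆ r ∈ Set.Icc (0 : ℝ) 1, |V (r • u + (1 - r) • v)|) ^ (1 - 1 / c)) :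
    ∀ i : ℕ, i ≤ n →
      ‖iteratedFDeriv ℝ i V x - iteratedFDeriv ℝ i V y‖ ≤
        c * (2 : ℝ) ^ (c - 1) * ‖x - y‖ * (1 + V x + ‖x - y‖ ^ (c - 1)) := by
  simpa only [Real.norm_of_nonneg (hV0 x)] using stmt6_general hc n x y hsmooth hbound
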